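/- arXiv:1910.13469 — 3 statements merged into one kernel-verified Lean document; each statement's English description precedes it below -/
import Mathlib

section
/- Let 0 < β < 1 and let φ : ℝ → ℝ be the unique function satisfying φ(x) = tanh(β·(x + φ(x))) for every x ∈ ℝ. Then φ is twice differentiable on ℝ and for every x ∈ ℝ, φ″(x) = −2β²·φ(x)·(1 − φ(x)²)/(1 − β·(1 − φ(x)²))³. -/
/-!
Put `g x = x + φ x` and `f u = tanh (β * u)`. The equation `φ x = f (x + φ x)` says that `g` is a
right inverse of `u ↦ u - f u`. This map is strictly increasing because `f' ≤ max β 0 < 1`, so `g`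
is its continuous inverse. The inverse function rule then gives `φ' = f' / (1 - f')` along the
curve, and differentiating once more, with `g' = 1 / (1 - f')`, gives `φ'' = f'' / (1 - f') ^ 3`.
-/

open Filter Topology

theorem continuous_of_strictMono_of_rightInverse {α β : Type*} [LinearOrder α] [TopologicalSpace α]
    [OrderTopology α] [PartialOrder β] [TopologicalSpace β] [OrderTopology β] {F : α → β}
    {g : β → α} (hF : StrictMono F) (hg : Function.RightInverse g F) : Continuous g :=
  (hF.orderIsoOfRightInverse F g hg).symm.continuous

theorem continuous_of_eq_comp_id_add {α : Type*} [AddCommGroup α] [LinearOrder α]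
    [TopologicalSpace α] [OrderTopology α] [ContinuousSub α] {f φ : α → α}
    (hf : StrictMono fun u => u - f u) (hφ : ∀ x, φ x = f (x + φ x)) : Continuous φ := by
  have hinv : Function.RightInverse (fun x => x + φ x) fun u => u - f u := fun x => by
    simp only [← hφ, add_sub_cancel_right]
  have hg : Continuous fun x => x + φ x := continuous_of_strictMono_of_rightInverse hf hinv
  exact (hg.sub continuous_id).congr fun x => add_sub_cancel_left x (φ x)

theorem strictMono_id_sub_of_hasDerivAt_lt_one {f f' : ℝ → ℝ} (hf : ∀ u, HasDerivAt f (f' u) u)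
    (hf' : ∀ u, f' u < 1) : StrictMono fun u => u - f u :=
  strictMono_of_hasDerivAt_pos (fun u => (hasDerivAt_id u).sub (hf u)) fun u => sub_pos.2 (hf' u)

section NormedField

variable {𝕜 : Type*} [NontriviallyNormedField 𝕜] {f φ : 𝕜 → 𝕜} {x : 𝕜}

theorem hasDerivAt_id_add_of_eq_comp_id_add {d : 𝕜} (hf : HasDerivAt f d (x + φ x)) (hd : d ≠ 1)
    (hcont : ContinuousAt φ x) (hφ : ∀ᶠ y in 𝓝 x, φ y = f (y + φ y)) :
    HasDerivAt (fun y => y + φ y) (1 - d)⁻¹ x := by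
  have hinv : ∀ᶠ y in 𝓝 x, y + φ y - f (y + φ y) = y :=
    hφ.mono fun y hy => by rw [← hy, add_sub_cancel_right]
  exact ((hasDerivAt_id _).sub hf).of_local_left_inverse (continuousAt_id.add hcont)
    (sub_ne_zero.2 hd.symm) hinv

theorem hasDerivAt_of_eq_comp_id_add {d : 𝕜} (hf : HasDerivAt f d (x + φ x)) (hd : d ≠ 1)
    (hcont : ContinuousAt φ x) (hφ : ∀ᶠ y in 𝓝 x, φ y = f (y + φ y)) :
    HasDerivAt φ (d / (1 - d)) x := by
  have hg := hasDerivAt_id_add_of_eq_comp_id_add hf hd hcont hφ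
  rw [div_eq_mul_inv]
  exact (hf.comp x hg).congr_of_eventuallyEq hφ

theorem hasDerivAt_deriv_of_eq_comp_id_add {f' : 𝕜 → 𝕜} {d : 𝕜}
    (hf : ∀ᶠ u in 𝓝 (x + φ x), HasDerivAt f (f' u) u) (hf' : HasDerivAt f' d (x + φ x))
    (hne : f' (x + φ x) ≠ 1) (hcont : ∀ᶠ y in 𝓝 x, ContinuousAt φ y)
    (hφ : ∀ᶠ y in 𝓝 x, φ y = f (y + φ y)) :
    HasDerivAt (deriv φ) (d / (1 - f' (x + φ x)) ^ 3) x := by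
  have hg := hasDerivAt_id_add_of_eq_comp_id_add hf.self_of_nhds hne hcont.self_of_nhds hφ
  have hderiv : deriv φ =ᶠ[𝓝 x] fun y => f' (y + φ y) / (1 - f' (y + φ y)) := by
    filter_upwards [hg.continuousAt.eventually hf, hcont, hφ.eventually_nhds,
      hg.continuousAt.eventually (hf'.continuousAt.eventually_ne hne)] with y hfy hcy hφy hney
    exact (hasDerivAt_of_eq_comp_id_add hfy hney hcy hφy).deriv
  have hf'g := hf'.comp x hg
  have hne0 : 1 - f' (x + φ x) ≠ 0 := sub_ne_zero.2 hne.symm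
  refine ((hf'g.div (hf'g.const_sub 1) hne0).congr_of_eventuallyEq hderiv).congr_deriv ?_
  simp only [Function.comp_apply]
  field_simp
  ring

end NormedField

theorem hasDerivAt_tanh (u : ℝ) : HasDerivAt Real.tanh (1 - Real.tanh u ^ 2) u := by
  have hcosh : Real.cosh u ≠ 0 := (Real.cosh_pos u).ne'
  have hquot : Real.tanh = Real.sinh / Real.cosh := funext Real.tanh_eq_sinh_div_cosh
  rw [hquot]
  refine ((Real.hasDerivAt_sinh u).div (Real.hasDerivAt_cosh u) hcosh).congr_deriv ?_
  simp only [Pi.div_apply]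
  field_simp

theorem hasDerivAt_tanh_const_mul (β u : ℝ) :
    HasDerivAt (fun v => Real.tanh (β * v)) (β * (1 - Real.tanh (β * u) ^ 2)) u := by
  rw [mul_comm β (1 - _)]
  exact (hasDerivAt_tanh (β * u)).comp u (hasDerivAt_const_mul β)

theorem hasDerivAt_mul_one_sub_tanh_sq (β u : ℝ) :
    HasDerivAt (fun v => β * (1 - Real.tanh (β * v) ^ 2))
      (-2 * β ^ 2 * Real.tanh (β * u) * (1 - Real.tanh (β * u) ^ 2)) u := by
  refine ((((hasDerivAt_tanh_const_mul β u).pow 2).const_sub 1).const_mul β).congr_deriv ?_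
  push_cast
  ring

theorem mul_one_sub_tanh_sq_lt_one {β : ℝ} (hβ : β < 1) (u : ℝ) :
    β * (1 - Real.tanh u ^ 2) < 1 := by
  have hpos : 0 < 1 - Real.tanh u ^ 2 := sub_pos.2 (Real.tanh_sq_lt_one u)
  calc
    β * (1 - Real.tanh u ^ 2) < 1 * (1 - Real.tanh u ^ 2) := by gcongr
    _ ≤ 1 := by linarith [sq_nonneg (Real.tanh u)]

theorem invariant_curve_second_deriv_general (β : ℝ) (hβ : β < 1) (φ : ℝ → ℝ)
    (hφ : ∀ x, φ x = Real.tanh (β * (x + φ x))) :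
    (∀ x, DifferentiableAt ℝ φ x) ∧ (∀ x, DifferentiableAt ℝ (deriv φ) x) ∧
    ∀ x, deriv (deriv φ) x =
      -2 * β ^ 2 * φ x * (1 - φ x ^ 2) / (1 - β * (1 - φ x ^ 2)) ^ 3 := by
  have hslope (u : ℝ) := mul_one_sub_tanh_sq_lt_one hβ (β * u)
  have hcont : Continuous φ :=
    continuous_of_eq_comp_id_add
      (strictMono_id_sub_of_hasDerivAt_lt_one (hasDerivAt_tanh_const_mul β) hslope) hφ
  have hfirst (x : ℝ) : DifferentiableAt ℝ φ x :=
    (hasDerivAt_of_eq_comp_id_add (hasDerivAt_tanh_const_mul β _) (hslope _).ne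
      hcont.continuousAt (.of_forall hφ)).differentiableAt
  have hsecond (x : ℝ) : HasDerivAt (deriv φ)
      (-2 * β ^ 2 * φ x * (1 - φ x ^ 2) / (1 - β * (1 - φ x ^ 2)) ^ 3) x := by
    have h := hasDerivAt_deriv_of_eq_comp_id_add (x := x)
      (.of_forall (hasDerivAt_tanh_const_mul β)) (hasDerivAt_mul_one_sub_tanh_sq β _) (hslope _).ne
      (.of_forall fun _ => hcont.continuousAt) (.of_forall hφ)
    rwa [← hφ x] at h
  exact ⟨hfirst, fun x => (hsecond x).differentiableAt, fun x => (hsecond x).deriv⟩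

/-- Subcritical case 0 < β < 1: the unique solution φ of φ(x) = tanh(β(x + φ(x))) is
twice differentiable with φ″(x) = −2β²φ(x)(1 − φ(x)²)/(1 − β(1 − φ(x)²))³. -/
theorem invariant_curve_second_deriv (β : ℝ) (h0 : 0 < β) (h1 : β < 1) (φ : ℝ → ℝ)
    (hφ : ∀ x, φ x = Real.tanh (β * (x + φ x))) :
    (∀ x, DifferentiableAt ℝ φ x) ∧ (∀ x, DifferentiableAt ℝ (deriv φ) x) ∧
    ∀ x, deriv (deriv φ) x =
      -2 * β^2 * φ x * (1 - (φ x)^2) / (1 - β * (1 - (φ x)^2))^3 :=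
  invariant_curve_second_deriv_general β h1 φ hφ
end

section
/- Let β > 1, m_a := √(1 − 1/β), λ_a := (1/β)·artanh(√(1 − 1/β)), define g : (−1,1) → ℝ by g(y) := 2βy − 2β(m_a − λ_a) − log(1+y) + log(1−y), let m_b be the unique zero of g in (−1,1) distinct from m_a, and for ε > 0 set f := g − βε on (−1,1). Then f has a unique zero m* ∈ (−1,1); moreover m* < m_b, f(y) > 0 for y ∈ (−1, m*), f(y) < 0 for y ∈ (m*, 1), and f(y) < 0 for every y ∈ [0,1). -/
/-- Inverse hyperbolic tangent: artanh(y) = (1/2)·log((1+y)/(1−y)). -/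
noncomputable def artanh (y : ℝ) : ℝ := (1/2) * Real.log ((1 + y) / (1 - y))

/-- The critical ordinate m_a(β) = √(1 − 1/β). -/
noncomputable def mCrit (β : ℝ) : ℝ := Real.sqrt (1 - 1/β)

/-- The critical abscissa λ_a(β) = (1/β)·artanh(√(1 − 1/β)). -/
noncomputable def lCrit (β : ℝ) : ℝ := (1/β) * artanh (Real.sqrt (1 - 1/β))

/-- The function g(y) = 2βy − 2β(m_a − λ_a) − log(1+y) + log(1−y). -/
noncomputable def gJump (β : ℝ) (y : ℝ) : ℝ :=
  2 * β * y - 2 * β * (mCrit β - lCrit β) - Real.log (1 + y) + Real.log (1 - y)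

/-- The perturbed function f = g − βε. -/
noncomputable def fJump (β ε : ℝ) (y : ℝ) : ℝ := gJump β y - β * ε

/-!
The derivative of `gJump β` is `2β (m_a² - y²) / (1 - y²)`, so on `(-1, 1)` the function decreases
up to `-m_a`, increases up to `m_a` and decreases again. As `gJump β` vanishes at its local maximum
`m_a`, it is nonpositive on `[-m_a, 1)`, and subtracting `β ε > 0` makes it negative there. On the
remaining branch `(-1, -m_a]` the perturbed function decreases strictly from `+∞` to a negative
value, so it crosses zero exactly once; since it equals `-β ε < 0` at every zero of `gJump β`, the
crossing lies to the left of each of them.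
-/

open Set Filter Topology

section Crossing

variable {α δ : Type*} [ConditionallyCompleteLinearOrder α] [TopologicalSpace α] [OrderTopology α]
  [DenselyOrdered α] [LinearOrder δ] [TopologicalSpace δ] [OrderClosedTopology δ]

theorem exists_crossing_of_strictAntiOn {f : α → δ} {a b c z : α} {w : δ}
    (hanti : StrictAntiOn f (Ioc a c)) (hcont : ContinuousOn f (Ioc a c))
    (hz : z ∈ Ioc a c) (hwz : w < f z) (hcb : c < b) (hlt : ∀ y ∈ Ico c b, f y < w) :
    ∃ s ∈ Ioo a c, f s = w ∧ (∀ y ∈ Ioo a s, w < f y) ∧ ∀ y ∈ Ioo s b, f y < w := by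
  have hcw : f c < w := hlt c ⟨le_rfl, hcb⟩
  have hsub : Icc z c ⊆ Ioc a c := fun y hy ↦ ⟨hz.1.trans_le hy.1, hy.2⟩
  obtain ⟨s, hs, rfl⟩ := intermediate_value_Icc' hz.2 (hcont.mono hsub) ⟨hcw.le, hwz.le⟩
  have hsc : s < c := hs.2.lt_of_ne fun h ↦ hcw.ne (congrArg f h.symm)
  have hs_mem : s ∈ Ioc a c := hsub hs
  refine ⟨s, ⟨hs_mem.1, hsc⟩, rfl, fun y hy ↦ ?_, fun y hy ↦ ?_⟩
  · exact hanti ⟨hy.1, hy.2.le.trans hs.2⟩ hs_mem hy.2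
  · rcases le_total y c with hyc | hcy
    · exact hanti hs_mem ⟨hs_mem.1.trans hy.1, hyc⟩ hy.1
    · exact hlt y ⟨hcy, hy.2⟩

end Crossing

theorem two_mul_artanh {y : ℝ} (hy : y ∈ Ioo (-1) 1) :
    2 * artanh y = Real.log (1 + y) - Real.log (1 - y) := by
  rw [artanh, Real.log_div (by linarith [hy.1]) (by linarith [hy.2])]
  ring

theorem hasDerivAt_gJump (β : ℝ) {y : ℝ} (hy : y ∈ Ioo (-1) 1) :
    HasDerivAt (gJump β) (2 * β - 2 / (1 - y ^ 2)) y := by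
  have hadd : 1 + y ≠ 0 := by linarith [hy.1]
  have hsub : 1 - y ≠ 0 := by linarith [hy.2]
  have hlin : HasDerivAt (fun x ↦ 2 * β * x) (2 * β) y := by
    simpa using (hasDerivAt_id y).const_mul (2 * β)
  have hlog_add := ((hasDerivAt_id y).const_add 1).log hadd
  have hlog_sub := ((hasDerivAt_id y).const_sub 1).log hsub
  refine (((hlin.sub_const _).sub hlog_add).add hlog_sub).congr_deriv ?_
  rw [show 1 - y ^ 2 = (1 + y) * (1 - y) by ring, id]
  field_simp
  ring

theorem continuousOn_gJump (β : ℝ) : ContinuousOn (gJump β) (Ioo (-1) 1) :=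
  fun _ hy ↦ (hasDerivAt_gJump β hy).continuousAt.continuousWithinAt

theorem tendsto_gJump_atTop (β : ℝ) : Tendsto (gJump β) (𝓝[>] (-1)) atTop := by
  have hlog_add : Tendsto (fun y : ℝ ↦ -Real.log (1 + y)) (𝓝[>] (-1)) atTop := by
    refine tendsto_neg_atBot_atTop.comp (Real.tendsto_log_nhdsGT_zero.comp ?_)
    refine tendsto_nhdsWithin_of_tendsto_nhds_of_eventually_within _ ?_ ?_
    · exact ((continuous_const_add 1).tendsto' (-1 : ℝ) 0 (by norm_num)).mono_left inf_le_left
    · filter_upwards [self_mem_nhdsWithin] with y hy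
      exact neg_lt_iff_pos_add'.1 (mem_Ioi.1 hy)
  have hrest : ContinuousAt
      (fun y : ℝ ↦ 2 * β * y - 2 * β * (mCrit β - lCrit β) + Real.log (1 - y)) (-1) := by
    fun_prop (disch := norm_num)
  refine ((hrest.tendsto.mono_left inf_le_left).add_atTop hlog_add).congr fun y ↦ ?_
  rw [gJump]
  ring

section CriticalPoint

variable {β y : ℝ}

theorem mCrit_nonneg (β : ℝ) : 0 ≤ mCrit β :=
  Real.sqrt_nonneg _

theorem mCrit_lt_one (hβ : 0 < β) : mCrit β < 1 := by
  rw [mCrit, Real.sqrt_lt' one_pos, one_pow]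
  exact sub_lt_self 1 (one_div_pos.2 hβ)

theorem mul_mCrit_sq (hβ : 1 ≤ β) : β * mCrit β ^ 2 = β - 1 := by
  have hβ0 : 0 < β := one_pos.trans_le hβ
  rw [mCrit, Real.sq_sqrt (sub_nonneg.2 ((div_le_one hβ0).2 hβ))]
  field_simp

theorem mul_lCrit (hβ : β ≠ 0) : β * lCrit β = artanh (mCrit β) := by
  rw [lCrit, ← mul_assoc, mul_one_div_cancel hβ, one_mul, mCrit]

theorem gJump_mCrit (hβ : 0 < β) : gJump β (mCrit β) = 0 := by
  have hlog := two_mul_artanh ⟨by linarith [mCrit_nonneg β], mCrit_lt_one hβ⟩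
  rw [gJump]
  linear_combination 2 * mul_lCrit hβ.ne' + hlog

theorem deriv_gJump (hβ : 1 ≤ β) (hy : |y| < 1) :
    deriv (gJump β) y = 2 * β / (1 - y ^ 2) * (mCrit β ^ 2 - y ^ 2) := by
  have hne : 1 - y ^ 2 ≠ 0 := (sub_pos.2 ((sq_lt_one_iff_abs_lt_one y).2 hy)).ne'
  rw [(hasDerivAt_gJump β (abs_lt.1 hy)).deriv]
  field_simp
  linear_combination -mul_mCrit_sq hβ

theorem deriv_gJump_pos (hβ : 1 ≤ β) (hy : |y| < mCrit β) : 0 < deriv (gJump β) y := by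
  have hy1 : |y| < 1 := hy.trans (mCrit_lt_one (one_pos.trans_le hβ))
  have hden : 0 < 1 - y ^ 2 := sub_pos.2 ((sq_lt_one_iff_abs_lt_one y).2 hy1)
  rw [deriv_gJump hβ hy1]
  exact mul_pos (div_pos (by linarith) hden) (sub_pos.2 (sq_lt_sq' (abs_lt.1 hy).1 (abs_lt.1 hy).2))

theorem deriv_gJump_neg (hβ : 1 ≤ β) (hmy : mCrit β < |y|) (hy : |y| < 1) :
    deriv (gJump β) y < 0 := by
  have hden : 0 < 1 - y ^ 2 := sub_pos.2 ((sq_lt_one_iff_abs_lt_one y).2 hy)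
  have hsq : mCrit β ^ 2 < y ^ 2 := sq_lt_sq.2 (by rwa [abs_of_nonneg (mCrit_nonneg β)])
  rw [deriv_gJump hβ hy]
  exact mul_neg_of_pos_of_neg (div_pos (by linarith) hden) (sub_neg.2 hsq)

theorem strictAntiOn_gJump_Ioc (hβ : 1 ≤ β) : StrictAntiOn (gJump β) (Ioc (-1) (-mCrit β)) := by
  have hm := mCrit_nonneg β
  refine strictAntiOn_of_deriv_neg (convex_Ioc _ _)
    ((continuousOn_gJump β).mono fun y hy ↦ ⟨hy.1, by linarith [hy.2]⟩) fun y hy ↦ ?_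
  rw [interior_Ioc] at hy
  have habs : |y| = -y := abs_of_nonpos (by linarith [hy.2])
  exact deriv_gJump_neg hβ (by linarith [hy.2]) (by linarith [hy.1])

theorem strictMonoOn_gJump_Icc (hβ : 1 ≤ β) :
    StrictMonoOn (gJump β) (Icc (-mCrit β) (mCrit β)) := by
  have hm := mCrit_lt_one (one_pos.trans_le hβ)
  refine strictMonoOn_of_deriv_pos (convex_Icc _ _)
    ((continuousOn_gJump β).mono (Icc_subset_Ioo (neg_lt_neg hm) hm)) fun y hy ↦ ?_
  rw [interior_Icc] at hy
  exact deriv_gJump_pos hβ (abs_lt.2 hy)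

theorem strictAntiOn_gJump_Ico (hβ : 1 ≤ β) : StrictAntiOn (gJump β) (Ico (mCrit β) 1) := by
  have hm := mCrit_nonneg β
  refine strictAntiOn_of_deriv_neg (convex_Ico _ _)
    ((continuousOn_gJump β).mono fun y hy ↦ ⟨by linarith [hy.1], hy.2⟩) fun y hy ↦ ?_
  rw [interior_Ico] at hy
  have habs : |y| = y := abs_of_nonneg (hm.trans hy.1.le)
  exact deriv_gJump_neg hβ (habs.symm ▸ hy.1) (habs.symm ▸ hy.2)

theorem gJump_nonpos (hβ : 1 ≤ β) (hy : y ∈ Ico (-mCrit β) 1) : gJump β y ≤ 0 := by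
  have hβ0 : 0 < β := one_pos.trans_le hβ
  have hm : -mCrit β ≤ mCrit β := neg_le_self (mCrit_nonneg β)
  rw [← gJump_mCrit hβ0]
  rcases le_total y (mCrit β) with hym | hmy
  · exact (strictMonoOn_gJump_Icc hβ).monotoneOn ⟨hy.1, hym⟩ ⟨hm, le_rfl⟩ hym
  · exact (strictAntiOn_gJump_Ico hβ).antitoneOn ⟨le_rfl, mCrit_lt_one hβ0⟩ ⟨hmy, hy.2⟩ hmy

end CriticalPoint

theorem fJump_neg {β ε y : ℝ} (hβ : 1 ≤ β) (hε : 0 < ε) (hy : y ∈ Ico (-mCrit β) 1) :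
    fJump β ε y < 0 :=
  sub_neg.2 ((gJump_nonpos hβ hy).trans_lt (mul_pos (one_pos.trans_le hβ) hε))

theorem exists_fJump_crossing {β ε : ℝ} (hβ : 1 ≤ β) (hε : 0 < ε) :
    ∃ s ∈ Ioo (-1) (-mCrit β), fJump β ε s = 0 ∧
      (∀ y ∈ Ioo (-1) s, 0 < fJump β ε y) ∧ ∀ y ∈ Ioo s 1, fJump β ε y < 0 := by
  have hm0 := mCrit_nonneg β
  have hm1 : -1 < -mCrit β := neg_lt_neg (mCrit_lt_one (one_pos.trans_le hβ))
  have hanti : StrictAntiOn (fJump β ε) (Ioc (-1) (-mCrit β)) := fun x hx y hy hxy ↦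
    sub_lt_sub_right (strictAntiOn_gJump_Ioc hβ hx hy hxy) _
  have hcont : ContinuousOn (fJump β ε) (Ioc (-1) (-mCrit β)) :=
    ((continuousOn_gJump β).sub continuousOn_const).mono fun y hy ↦ ⟨hy.1, by linarith [hy.2]⟩
  obtain ⟨z, hgz, hz⟩ := (((tendsto_gJump_atTop β).eventually_gt_atTop (β * ε)).and
    (Ioc_mem_nhdsGT hm1)).exists
  exact exists_crossing_of_strictAntiOn hanti hcont hz (sub_pos.2 hgz) (by linarith)
    fun y hy ↦ fJump_neg hβ hε hy

/-- For β > 1 and ε > 0, with m_b the unique zero of g in (−1,1) distinct from m_a: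
the perturbed function f = g − βε has a unique zero m* ∈ (−1,1); moreover m* < m_b,
f > 0 on (−1, m*), f < 0 on (m*, 1), and f < 0 on [0,1). -/
theorem fJump_unique_zero (β ε : ℝ) (hβ : 1 < β) (hε : 0 < ε) (m_b : ℝ)
    (hmb : m_b ∈ Set.Ioo (-1 : ℝ) 1) (hne : m_b ≠ mCrit β) (hzero : gJump β m_b = 0)
    (huniq : ∀ y ∈ Set.Ioo (-1 : ℝ) 1, y ≠ mCrit β → gJump β y = 0 → y = m_b) :
    ∃ mstar ∈ Set.Ioo (-1 : ℝ) 1,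
      fJump β ε mstar = 0 ∧
      (∀ y ∈ Set.Ioo (-1 : ℝ) 1, fJump β ε y = 0 → y = mstar) ∧
      mstar < m_b ∧
      (∀ y ∈ Set.Ioo (-1 : ℝ) mstar, 0 < fJump β ε y) ∧
      (∀ y ∈ Set.Ioo mstar 1, fJump β ε y < 0) ∧
      (∀ y ∈ Set.Ico (0 : ℝ) 1, fJump β ε y < 0) := by
  have hm := mCrit_nonneg β
  obtain ⟨s, hs, hs0, hpos, hneg⟩ := exists_fJump_crossing hβ.le hε
  have hs1 : s < 1 := by linarith [hs.2]
  have hle : ∀ y ∈ Set.Ioo (-1 : ℝ) 1, fJump β ε y ≤ 0 → s ≤ y := fun y hy hfy ↦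
    not_lt.1 fun hys ↦ (hpos y ⟨hy.1, hys⟩).not_ge hfy
  have hmb_neg : fJump β ε m_b < 0 := by
    rw [fJump, hzero, zero_sub, neg_lt_zero]
    exact mul_pos (one_pos.trans hβ) hε
  have hs_lt : s < m_b := (hle m_b hmb hmb_neg.le).lt_of_ne fun h ↦ hmb_neg.ne (h ▸ hs0)
  refine ⟨s, ⟨hs.1, hs1⟩, hs0, fun y hy hy0 ↦ ?_, hs_lt, hpos, hneg, fun y hy ↦ ?_⟩
  · exact le_antisymm (not_lt.1 fun hsy ↦ (hneg y ⟨hsy, hy.2⟩).ne hy0) (hle y hy hy0.le)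
  · exact fJump_neg hβ.le hε ⟨by linarith [hy.1], hy.2⟩
end

section
/- Let β₁, β₂ ≥ 0 with β₁ + β₂ < 1 and let μ be a Borel probability measure on ℝ. Then there exists exactly one bounded measurable function m : ℝ → [−1,1] such that m(x) = tanh(β₁(x + m(x)) + β₂·∫ m dμ) for every x ∈ ℝ; moreover this m is continuous and takes values in (−1,1). -/
/-!
Since `tanh` is 1-Lipschitz, the map `m ↦ tanh (β₁ (x + m x) + β₂ ∫ m dμ)` on bounded continuous
functions contracts the supremum distance by the factor `|β₁| + |β₂| μ(ℝ)`. Its fixed point is the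
only solution among all functions: once the number `∫ n dμ` is regarded as given, the equation for
a solution `n` is a scalar fixed-point equation at each `x`, contracting by the factor `|β₁|` and
depending continuously on `x`, so `n` is automatically continuous.
-/

open MeasureTheory
open Function Set Filter Topology
open scoped NNReal BoundedContinuousFunction

theorem hasDerivAt_tanh_s13 (x : ℝ) : HasDerivAt Real.tanh (1 / Real.cosh x ^ 2) x := by
  have h := (Real.hasDerivAt_sinh x).div (Real.hasDerivAt_cosh x) (Real.cosh_pos x).ne'
  rw [← sq, ← sq, Real.cosh_sq_sub_sinh_sq] at h
  exact h.congr_of_eventuallyEq (.of_forall Real.tanh_eq_sinh_div_cosh)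

theorem lipschitzWith_one_tanh : LipschitzWith 1 Real.tanh := by
  refine lipschitzWith_of_nnnorm_deriv_le (fun x ↦ (hasDerivAt_tanh_s13 x).differentiableAt)
    fun x ↦ ?_
  have h : (1 : ℝ) ≤ Real.cosh x ^ 2 := one_le_pow₀ (Real.one_le_cosh x)
  rw [(hasDerivAt_tanh_s13 x).deriv, ← NNReal.coe_le_coe, coe_nnnorm,
    Real.norm_of_nonneg (by positivity)]
  exact div_le_one_of_le₀ h (by positivity)

theorem continuous_of_isFixedPt_contractingWith {X E : Type*} [TopologicalSpace X] [MetricSpace E]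
    {k : ℝ≥0} {f : X → E → E} {u : X → E} (hf : ∀ x, ContractingWith k (f x))
    (hcont : ∀ e, Continuous fun x ↦ f x e) (hu : ∀ x, IsFixedPt (f x) (u x)) :
    Continuous u := by
  refine continuous_iff_continuousAt.2 fun x ↦ tendsto_iff_dist_tendsto_zero.2 ?_
  have hbound (y : X) : dist (u y) (u x) ≤ dist (u x) (f y (u x)) / (1 - k) := by
    rw [dist_comm]
    exact (hf y).dist_le_of_fixedPoint (u x) (hu y)
  have hlim : Tendsto (fun y ↦ dist (u x) (f y (u x)) / (1 - k)) (𝓝 x) (𝓝 0) := by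
    have h : Continuous fun y ↦ dist (u x) (f y (u x)) / (1 - k) :=
      (continuous_const.dist (hcont (u x))).div_const _
    simpa only [(hu x).eq, dist_self, zero_div] using h.tendsto x
  exact squeeze_zero (fun _ ↦ dist_nonneg) hbound hlim

section MeanField

variable {X : Type*} [MeasurableSpace X]

/-- The self-consistency equation `m = φ (h + a m + b ∫ m dμ)` for the magnetization profile `m`
of a mean-field system with response function `φ`, external field `h`, local coupling `a` and
global coupling `b`. -/
def IsMeanFieldSolution (φ : ℝ → ℝ) (h : X → ℝ) (a b : ℝ) (μ : Measure X) (m : X → ℝ) : Prop :=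
  ∀ x, m x = φ (h x + a * m x + b * ∫ y, m y ∂μ)

variable [TopologicalSpace X]

/-- The right-hand side of the mean-field equation as a self-map of the complete space of bounded
continuous profiles; it lands there because `φ` is bounded, even if the field `h` is not. -/
noncomputable def meanFieldMap (φ : ℝ →ᵇ ℝ) (h : C(X, ℝ)) (a b : ℝ) (μ : Measure X)
    (m : X →ᵇ ℝ) : X →ᵇ ℝ :=
  φ.compContinuous ⟨fun x ↦ h x + a * m x + b * ∫ y, m y ∂μ, by fun_prop⟩

theorem isFixedPt_meanFieldMap_iff {φ : ℝ →ᵇ ℝ} {h : C(X, ℝ)} {a b : ℝ} {μ : Measure X}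
    {m : X →ᵇ ℝ} : IsFixedPt (meanFieldMap φ h a b μ) m ↔ IsMeanFieldSolution φ h a b μ m :=
  DFunLike.ext_iff.trans (forall_congr' fun _ ↦ eq_comm)

theorem IsMeanFieldSolution.continuous {φ : ℝ → ℝ} {h : X → ℝ} {a b : ℝ} {μ : Measure X}
    {m : X → ℝ} {K : ℝ≥0} (hm : IsMeanFieldSolution φ h a b μ m) (hφ : LipschitzWith K φ)
    (hh : Continuous h) (hK : K * ‖a‖₊ < 1) : Continuous m := by
  let f (x : X) (s : ℝ) : ℝ := φ (h x + a * s + b * ∫ y, m y ∂μ)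
  have hf (x : X) : LipschitzWith (K * ‖a‖₊) (f x) := by
    refine hφ.comp (LipschitzWith.of_dist_le_mul fun s t ↦ ?_)
    rw [dist_add_right, dist_add_left, Real.dist_eq, Real.dist_eq, ← mul_sub, abs_mul,
      coe_nnnorm, Real.norm_eq_abs]
  have hcont (s : ℝ) : Continuous fun x ↦ f x s := hφ.continuous.comp (by fun_prop)
  exact continuous_of_isFixedPt_contractingWith (fun x ↦ ⟨hK, hf x⟩) hcont fun x ↦ (hm x).symm

variable [OpensMeasurableSpace X]

theorem lipschitzWith_integral_boundedContinuousFunction (μ : Measure X) [IsFiniteMeasure μ] :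
    LipschitzWith (measureUnivNNReal μ) fun m : X →ᵇ ℝ ↦ ∫ x, m x ∂μ := by
  refine LipschitzWith.of_dist_le_mul fun m n ↦ ?_
  rw [dist_eq_norm, dist_eq_norm, ← integral_sub (m.integrable μ) (n.integrable μ)]
  exact (m - n).norm_integral_le_mul_norm μ

variable {φ : ℝ →ᵇ ℝ} {K : ℝ≥0} {a b : ℝ} {μ : Measure X} [IsFiniteMeasure μ]

theorem lipschitzWith_meanFieldMap (hφ : LipschitzWith K φ) (h : C(X, ℝ)) :
    LipschitzWith (K * (‖a‖₊ + ‖b‖₊ * measureUnivNNReal μ)) (meanFieldMap φ h a b μ) := by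
  refine LipschitzWith.of_dist_le_mul fun m n ↦ (BoundedContinuousFunction.dist_le
    (by positivity)).2 fun x ↦ ?_
  have hlocal : dist (a * m x) (a * n x) ≤ ‖a‖ * dist m n := by
    rw [← smul_eq_mul, ← smul_eq_mul, dist_smul₀]
    gcongr
    exact m.dist_coe_le_dist x
  have hglobal : dist (b * ∫ y, m y ∂μ) (b * ∫ y, n y ∂μ) ≤
      ‖b‖ * (measureUnivNNReal μ * dist m n) := by
    rw [← smul_eq_mul, ← smul_eq_mul, dist_smul₀]
    gcongr
    exact (lipschitzWith_integral_boundedContinuousFunction μ).dist_le_mul m n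
  calc dist (meanFieldMap φ h a b μ m x) (meanFieldMap φ h a b μ n x)
      ≤ K * dist (h x + a * m x + b * ∫ y, m y ∂μ) (h x + a * n x + b * ∫ y, n y ∂μ) :=
        hφ.dist_le_mul _ _
    _ ≤ K * (‖a‖ * dist m n + ‖b‖ * (measureUnivNNReal μ * dist m n)) := by
        gcongr
        refine (dist_add_add_le _ _ _ _).trans (add_le_add ?_ hglobal)
        rwa [dist_add_left]
    _ = ↑(K * (‖a‖₊ + ‖b‖₊ * measureUnivNNReal μ)) * dist m n := by
        push_cast
        ring

theorem exists_forall_isMeanFieldSolution_iff_eq (hφ : LipschitzWith K φ) (h : C(X, ℝ))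
    (hK : K * (‖a‖₊ + ‖b‖₊ * measureUnivNNReal μ) < 1) :
    ∃ m : X →ᵇ ℝ, ∀ n : X → ℝ, IsMeanFieldSolution φ h a b μ n ↔ n = m := by
  have hcontr : ContractingWith _ (meanFieldMap φ h a b μ) :=
    ⟨hK, lipschitzWith_meanFieldMap hφ h⟩
  refine ⟨hcontr.fixedPoint, fun n ↦ ⟨fun hn ↦ ?_, ?_⟩⟩
  · have hcont : Continuous n :=
      hn.continuous hφ h.continuous ((mul_le_mul_right le_self_add K).trans_lt hK)
    have hbound (x : X) : ‖n x‖ ≤ ‖φ‖ := hn x ▸ φ.norm_coe_le_norm _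
    let nb : X →ᵇ ℝ := .ofNormedAddCommGroup n hcont ‖φ‖ hbound
    have hnb : nb = hcontr.fixedPoint :=
      hcontr.fixedPoint_unique (isFixedPt_meanFieldMap_iff.2 hn)
    exact congrArg DFunLike.coe hnb
  · rintro rfl
    exact isFixedPt_meanFieldMap_iff.1 hcontr.fixedPoint_isFixedPt

end MeanField

/-- The hyperbolic tangent bundled as a bounded continuous function, the response function of
Ising spins. -/
noncomputable def boundedTanh : ℝ →ᵇ ℝ :=
  .ofNormedAddCommGroup Real.tanh lipschitzWith_one_tanh.continuous 1
    fun x ↦ (Real.abs_tanh_lt_one x).le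

theorem order_N_fixed_point_wellposed_general (β₁ β₂ : ℝ) (μ : Measure ℝ) [IsFiniteMeasure μ]
    (hsub : |β₁| + |β₂| * μ.real univ < 1) :
    ∃ m : ℝ → ℝ,
      (∀ x, m x = Real.tanh (β₁ * (x + m x) + β₂ * ∫ y, m y ∂μ)) ∧
      (∀ n : ℝ → ℝ, (∀ x, n x = Real.tanh (β₁ * (x + n x) + β₂ * ∫ y, n y ∂μ)) → n = m) ∧
      Continuous m ∧ ∀ x, m x ∈ Ioo (-1 : ℝ) 1 := by
  have hK : 1 * (‖β₁‖₊ + ‖β₂‖₊ * measureUnivNNReal μ) < 1 := by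
    rw [one_mul, ← NNReal.coe_lt_coe]
    exact hsub
  obtain ⟨m, hm⟩ := exists_forall_isMeanFieldSolution_iff_eq (φ := boundedTanh)
    lipschitzWith_one_tanh (β₁ • .id ℝ) hK
  have hiff (n : ℝ → ℝ) :
      (∀ x, n x = Real.tanh (β₁ * (x + n x) + β₂ * ∫ y, n y ∂μ)) ↔ n = m := by
    simp only [mul_add]
    exact hm n
  have hfix := (hiff m).2 rfl
  refine ⟨m, hfix, fun n ↦ (hiff n).1, m.continuous, fun x ↦ ?_⟩
  rw [hfix x]
  exact ⟨Real.neg_one_lt_tanh _, Real.tanh_lt_one _⟩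

/-- Well-posedness of the order-N limit fixed-point equation of the two-level hierarchical
model (β₁ + β₂ < 1): there is exactly one bounded measurable m : ℝ → [−1,1] with
m(x) = tanh(β₁(x + m(x)) + β₂∫m dμ) for all x; moreover it is continuous with values
in (−1,1). -/
theorem order_N_fixed_point_wellposed (β₁ β₂ : ℝ) (h₁ : 0 ≤ β₁) (h₂ : 0 ≤ β₂)
    (hsub : β₁ + β₂ < 1) (μ : Measure ℝ) [IsProbabilityMeasure μ] :
    ∃ m : ℝ → ℝ,
      (Measurable m ∧ (∀ x, m x ∈ Set.Icc (-1 : ℝ) 1) ∧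
        ∀ x, m x = Real.tanh (β₁ * (x + m x) + β₂ * ∫ y, m y ∂μ)) ∧
      (∀ n : ℝ → ℝ, Measurable n → (∀ x, n x ∈ Set.Icc (-1 : ℝ) 1) →
        (∀ x, n x = Real.tanh (β₁ * (x + n x) + β₂ * ∫ y, n y ∂μ)) → n = m) ∧
      Continuous m ∧ (∀ x, m x ∈ Set.Ioo (-1 : ℝ) 1) := by
  obtain ⟨m, hfix, huniq, hcont, hmem⟩ := order_N_fixed_point_wellposed_general β₁ β₂ μ
    (by rwa [probReal_univ, mul_one, abs_of_nonneg h₁, abs_of_nonneg h₂])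
  exact ⟨m, ⟨hcont.measurable, fun x ↦ Ioo_subset_Icc_self (hmem x), hfix⟩,
    fun n _ _ hn ↦ huniq n hn, hcont, hmem⟩
end
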